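/- arXiv:0902.0433 — 3 statements merged into one kernel-verified Lean document; each statement's English description precedes it below -/
import Mathlib

section
/- For every integer n ≥ 2 and every k ≥ 0 such that q_k ≤ n ≤ q_{k+1} − 1, writing n = q_k + j with 0 ≤ j ≤ q_{k+1} − q_k − 1, one has f(n) = q_{k+1} + q_k − 1 + j. -/
open scoped Classical

noncomputable section

/-- The Gauss map. -/
def gaussMap (x : ℝ) : ℝ := Int.fract x⁻¹

/-- `pq α k` is the partial quotient `a_{k+1}` of the continued fraction of `α`. -/
def pq (α : ℝ) (k : ℕ) : ℕ := ⌊(gaussMap^[k] α)⁻¹⌋₊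

/-- `qd α (n+1)` is the convergent denominator `q_n`; `qd α 0 = q_{-1} = 0`, `qd α 1 = q₀ = 1`. -/
def qd (α : ℝ) : ℕ → ℕ
  | 0 => 0
  | 1 => 1
  | (n+2) => pq α n * qd α (n+1) + qd α n

/-- The circle map sequence of rotation number `α` (value `true` means letter `1`). -/
def v0 (α : ℝ) (n : ℤ) : Bool := decide (1 - α ≤ Int.fract ((n : ℝ) * α))

/-- The word `(v₀(m+1), …, v₀(m+n))`. -/
def word (α : ℝ) (m n : ℕ) : List Bool :=
  (List.range n).map (fun i => v0 α ((m : ℤ) + 1 + i))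

/-- `w` is a factor (admissible word) of `v₀`. -/
def IsFactor (α : ℝ) (w : List Bool) : Prop := ∃ m : ℕ, w = word α m w.length

/-- `w` occurs as a subword of the prefix `(v₀(1), …, v₀(N))`. -/
def OccursIn (α : ℝ) (w : List Bool) (N : ℕ) : Prop :=
  ∃ m : ℕ, m + w.length ≤ N ∧ w = word α m w.length

/-- `exhaust α n` is `f(n)`: the least `N` such that every factor of length `n`
occurs in `(v₀(1), …, v₀(N))`. -/
def exhaust (α : ℝ) (n : ℕ) : ℕ :=
  sInf {N | ∀ w : List Bool, w.length = n → IsFactor α w → OccursIn α w N}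

/-- number of occurrences of `w` in the prefix `(v₀(1), …, v₀(N))`. -/
def occCount (α : ℝ) (w : List Bool) (N : ℕ) : ℕ :=
  ((Finset.range N).filter (fun m => m + w.length ≤ N ∧ word α m w.length = w)).card

/-- the word `(v(m), v(m+1), …, v(m+n-1))` of a two-sided sequence. -/
def wordAt (v : ℤ → Bool) (m : ℤ) (n : ℕ) : List Bool :=
  (List.range n).map (fun i => v (m + i))

/-- the hull `Ω`: closure of the set of translates of `v₀`. -/
def hull (α : ℝ) : Set (ℤ → Bool) :=
  closure {u | ∃ m : ℤ, u = fun n => v0 α (n - m)}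

/-!
The word of length `n` starting at position `m + 1` depends only on the cell containing the
fractional part of `(m + 1)α` in the partition of the circle by the points `-tα`, `0 ≤ t ≤ n`.
Write `q = q_k`, `Q = q_{k+1}`. By the law of best approximation, for `n < Q` distinct cut points
are at distance at least `‖qα‖`, and `0 < ‖Qα‖ < ‖qα‖`. Hence the orbit points `(Q - t)α`, which
are the cut points displaced by `Qα`, all in the same direction, visit each cell once, so every
factor starts at one of the positions `1, …, Q`. If `q ≤ n`, then `Qα` lies in the cell between
the cut points `0` and `-qα`, and no earlier orbit point enters it, so position `Q` is needed.
The direction of the displacement is immaterial, since the reflection `α ↦ -α` of the circle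
preserves the relation of lying in the same cell.
-/

section BestApproximation

theorem mul_nonpos_of_abs_mul_add_mul_lt {a b q Q : ℤ} (hq : 0 ≤ q) (h : |a * q + b * Q| < Q) :
    a * b ≤ 0 := by
  have hQ : 0 < Q := (abs_nonneg _).trans_lt h
  rw [abs_lt] at h
  by_contra! hab
  rcases pos_and_pos_or_neg_and_neg_of_mul_pos hab with ⟨ha, hb⟩ | ⟨ha, hb⟩ <;> nlinarith

theorem abs_error_le_of_abs_lt {β : ℝ} {q Q p P : ℤ} (hq : 0 ≤ q)
    (hdet : IsUnit (q * P - Q * p)) (hopp : (Q * β - P) * (q * β - p) ≤ 0) {m z : ℤ}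
    (hm : |m| < Q) (hmz : m ≠ 0 ∨ z ≠ 0) : |q * β - p| ≤ |m * β - z| := by
  obtain ⟨a, b, rfl, rfl⟩ : ∃ a b : ℤ, m = a * q + b * Q ∧ z = a * p + b * P := by
    have hsq := Int.isUnit_mul_self hdet
    refine ⟨(q * P - Q * p) * (m * P - z * Q), (q * P - Q * p) * (z * q - m * p), ?_, ?_⟩
    · linear_combination -m * hsq
    · linear_combination -z * hsq
  have ha : a ≠ 0 := by
    rintro rfl
    have hb : b = 0 := by
      by_contra hb
      have hQ : 0 < Q := (abs_nonneg _).trans_lt hm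
      rw [zero_mul, zero_add, abs_mul, abs_of_pos hQ] at hm
      nlinarith [Int.one_le_abs hb]
    simp [hb] at hmz
  have ha_sq : (1 : ℝ) ≤ a ^ 2 := by
    exact_mod_cast (one_le_sq_iff_one_le_abs a).2 (Int.one_le_abs ha)
  have hab : (a * b : ℝ) ≤ 0 := by exact_mod_cast mul_nonpos_of_abs_mul_add_mul_lt hq hm
  -- `a(qβ - p)` and `b(Qβ - P)` do not have opposite signs, so they cannot cancel.
  have hcross : 0 ≤ (a * b : ℝ) * ((Q * β - P) * (q * β - p)) :=
    mul_nonneg_of_nonpos_of_nonpos hab hopp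
  rw [← sq_le_sq]
  calc (q * β - p) ^ 2
      ≤ a ^ 2 * (q * β - p) ^ 2 + 2 * ((a * b) * ((Q * β - P) * (q * β - p)))
          + (b * (Q * β - P)) ^ 2 := by
        linarith [mul_le_mul_of_nonneg_right ha_sq (sq_nonneg (q * β - p)),
          sq_nonneg (b * (Q * β - P))]
    _ = (((a * q + b * Q : ℤ) : ℝ) * β - ((a * p + b * P : ℤ) : ℝ)) ^ 2 := by push_cast; ring

/-- The Diophantine properties of two consecutive convergents `p / q` and `P / Q` of `β`: the
errors have opposite signs, the second is strictly smaller, and `‖mβ‖ ≥ |qβ - p|` for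
`0 < |m| < Q`. The last clause also covers `m = 0`, `z ≠ 0`, where it says `|qβ - p| ≤ 1`. -/
structure IsBestApproxPair (β : ℝ) (q Q : ℕ) (p P : ℤ) : Prop where
  error_mul_error_neg : (Q * β - P) * (q * β - p) < 0
  abs_error_lt : |Q * β - P| < |q * β - p|
  abs_error_le : ∀ m z : ℤ, |m| < Q → m ≠ 0 ∨ z ≠ 0 → |q * β - p| ≤ |m * β - z|

end BestApproximation

section Convergents

variable {α : ℝ}

theorem irrational_gaussMap {x : ℝ} (hx : Irrational x) : Irrational (gaussMap x) := by
  rw [gaussMap, ← Int.self_sub_floor]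
  exact (irrational_inv_iff.2 hx).sub_intCast _

theorem irrational_iterate_gaussMap (hα : Irrational α) : ∀ k, Irrational (gaussMap^[k] α)
  | 0 => hα
  | k + 1 => by
    rw [Function.iterate_succ_apply']
    exact irrational_gaussMap (irrational_iterate_gaussMap hα k)

theorem iterate_gaussMap_mem_Ioo (hα : Irrational α) (h0 : 0 < α) (h1 : α < 1) :
    ∀ k, gaussMap^[k] α ∈ Set.Ioo 0 1
  | 0 => ⟨h0, h1⟩
  | k + 1 => by
    have hne := (irrational_iterate_gaussMap hα (k + 1)).ne_zero
    rw [Function.iterate_succ_apply'] at hne ⊢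
    exact ⟨(Int.fract_nonneg _).lt_of_ne' hne, Int.fract_lt_one _⟩

theorem pq_pos (hα : Irrational α) (h0 : 0 < α) (h1 : α < 1) (k : ℕ) : 0 < pq α k := by
  obtain ⟨hpos, hlt⟩ := iterate_gaussMap_mem_Ioo hα h0 h1 k
  exact Nat.floor_pos.2 ((one_lt_inv₀ hpos).2 hlt).le

theorem pq_eq_inv_sub (hα : Irrational α) (h0 : 0 < α) (h1 : α < 1) (k : ℕ) :
    (pq α k : ℝ) = (gaussMap^[k] α)⁻¹ - gaussMap^[k + 1] α := by
  have hpos := (iterate_gaussMap_mem_Ioo hα h0 h1 k).1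
  rw [pq, natCast_floor_eq_intCast_floor (inv_pos.2 hpos).le, Function.iterate_succ_apply',
    gaussMap, Int.self_sub_fract]

theorem qd_succ_pos (hα : Irrational α) (h0 : 0 < α) (h1 : α < 1) : ∀ k, 0 < qd α (k + 1)
  | 0 => one_pos
  | k + 1 => Nat.add_pos_left (Nat.mul_pos (pq_pos hα h0 h1 k) (qd_succ_pos hα h0 h1 k)) _

/-- The convergent numerators, indexed like `qd`: `convNum α (n + 1)` is `p_n`, with
`p_{-1} = 1` and `p₀ = 0`. -/
def convNum (α : ℝ) : ℕ → ℤ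
  | 0 => 1
  | 1 => 0
  | (n + 2) => pq α n * convNum α (n + 1) + convNum α n

theorem qd_mul_convNum_sub (α : ℝ) (k : ℕ) :
    (qd α k : ℤ) * convNum α (k + 1) - qd α (k + 1) * convNum α k = (-1) ^ (k + 1) := by
  induction k with
  | zero => simp [qd, convNum]
  | succ k ih =>
    simp only [qd, convNum]
    push_cast
    linear_combination -ih

/-- The approximation error `q_n α - p_n`, indexed like `qd`. -/
def convError (α : ℝ) (k : ℕ) : ℝ := qd α k * α - convNum α k

theorem convError_add_two (α : ℝ) (k : ℕ) :
    convError α (k + 2) = pq α k * convError α (k + 1) + convError α k := by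
  simp only [convError, qd, convNum]
  push_cast
  ring

theorem convError_succ (hα : Irrational α) (h0 : 0 < α) (h1 : α < 1) (k : ℕ) :
    convError α (k + 1) = -gaussMap^[k] α * convError α k := by
  induction k with
  | zero => simp [convError, qd, convNum]
  | succ k ih =>
    have hne := (iterate_gaussMap_mem_Ioo hα h0 h1 k).1.ne'
    rw [convError_add_two, pq_eq_inv_sub hα h0 h1, ih]
    field_simp
    ring

theorem convError_ne_zero (hα : Irrational α) (h0 : 0 < α) (h1 : α < 1) (k : ℕ) :
    convError α k ≠ 0 := by
  induction k with
  | zero => simp [convError, qd, convNum]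
  | succ k ih =>
    rw [convError_succ hα h0 h1]
    exact mul_ne_zero (neg_ne_zero.2 (iterate_gaussMap_mem_Ioo hα h0 h1 k).1.ne') ih

theorem isBestApproxPair_qd (hα : Irrational α) (h0 : 0 < α) (h1 : α < 1) (k : ℕ) :
    IsBestApproxPair α (qd α k) (qd α (k + 1)) (convNum α k) (convNum α (k + 1)) := by
  obtain ⟨hpos, hlt⟩ := iterate_gaussMap_mem_Ioo hα h0 h1 k
  have hne := convError_ne_zero hα h0 h1 k
  have hneg : convError α (k + 1) * convError α k < 0 := by
    rw [convError_succ hα h0 h1, mul_assoc]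
    exact mul_neg_of_neg_of_pos (neg_neg_of_pos hpos) (mul_self_pos.2 hne)
  have hdecr : |convError α (k + 1)| < |convError α k| := by
    rw [convError_succ hα h0 h1, abs_mul, abs_neg, abs_of_pos hpos]
    exact mul_lt_of_lt_one_left (abs_pos.2 hne) hlt
  have hdet : IsUnit ((qd α k : ℤ) * convNum α (k + 1) - qd α (k + 1) * convNum α k) := by
    rw [qd_mul_convNum_sub]
    exact isUnit_neg_one.pow _
  exact ⟨hneg, hdecr, fun m z hm hmz ↦
    mod_cast abs_error_le_of_abs_lt (Int.natCast_nonneg _) hdet (mod_cast hneg.le) hm hmz⟩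

end Convergents

section Floor

variable {R : Type*} [CommRing R] [LinearOrder R] [IsStrictOrderedRing R] [FloorRing R]

theorem floor_add_sub_floor (x u : R) :
    ⌊x + u⌋ - ⌊x⌋ = -⌊-u⌋ - if Int.fract (-u) ≤ Int.fract x then 0 else 1 := by
  have hx := Int.floor_add_fract x
  have hu := Int.floor_add_fract (-u)
  rw [sub_eq_iff_eq_add, Int.floor_eq_iff]
  split_ifs <;> push_cast <;> constructor <;>
    linarith [Int.fract_nonneg x, Int.fract_lt_one x, Int.fract_nonneg (-u), Int.fract_lt_one (-u)]

theorem floor_add_sub_floor_eq_iff (x y u : R) :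
    ⌊x + u⌋ - ⌊x⌋ = ⌊y + u⌋ - ⌊y⌋ ↔
      (Int.fract (-u) ≤ Int.fract x ↔ Int.fract (-u) ≤ Int.fract y) := by
  rw [floor_add_sub_floor, floor_add_sub_floor, sub_right_inj]
  by_cases hx : Int.fract (-u) ≤ Int.fract x <;> by_cases hy : Int.fract (-u) ≤ Int.fract y <;>
    simp [hx, hy]

end Floor

section Cells

/-- The orbit points `aβ` and `bβ` lie in the same cell of the partition of the circle `ℝ / ℤ` into
half-open intervals with endpoints `-tβ`, `0 ≤ t ≤ n`. As `0` is an endpoint, this is encoded by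
comparing representatives in `[0, 1)`. -/
def SameCell (β : ℝ) (n a b : ℕ) : Prop :=
  ∀ t : ℕ, t ≤ n →
    (Int.fract (-(t * β)) ≤ Int.fract (a * β) ↔ Int.fract (-(t * β)) ≤ Int.fract (b * β))

theorem sameCell_iff_floor (β : ℝ) (n a b : ℕ) :
    SameCell β n a b ↔ ∀ t : ℕ, t ≤ n →
      ⌊((a + t : ℕ) : ℝ) * β⌋ - ⌊a * β⌋ = ⌊((b + t : ℕ) : ℝ) * β⌋ - ⌊b * β⌋ := by
  simp only [SameCell, Nat.cast_add, add_mul, floor_add_sub_floor_eq_iff]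

theorem floor_natCast_mul_neg {β : ℝ} (hβ : Irrational β) {a : ℕ} (ha : 0 < a) :
    ⌊a * -β⌋ = -⌊a * β⌋ - 1 := by
  have hnotMem : (a * β : ℝ) ∉ Set.range ((↑) : ℤ → ℝ) := by
    rintro ⟨z, hz⟩
    exact (hβ.natCast_mul ha.ne').ne_int z hz.symm
  rw [mul_neg, Int.floor_neg, (Int.ceil_eq_floor_add_one_iff_notMem _).2 hnotMem]
  ring

-- The reflected cells are closed at the other end, but no `aβ` with `a > 0` is an endpoint.
theorem sameCell_neg_iff {β : ℝ} (hβ : Irrational β) {n a b : ℕ} (ha : 0 < a) (hb : 0 < b) :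
    SameCell (-β) n a b ↔ SameCell β n a b := by
  simp only [sameCell_iff_floor, floor_natCast_mul_neg hβ ha, floor_natCast_mul_neg hβ hb,
    floor_natCast_mul_neg hβ (Nat.add_pos_left ha _),
    floor_natCast_mul_neg hβ (Nat.add_pos_left hb _)]
  refine forall₂_congr fun t _ ↦ ?_
  constructor <;> intro h <;> linarith

end Cells

namespace IsBestApproxPair

variable {β : ℝ} {q Q n : ℕ} {p P : ℤ}

theorem neg (h : IsBestApproxPair β q Q p P) : IsBestApproxPair (-β) q Q (-p) (-P) := by
  have hneg (m z : ℝ) : m * -β - -z = -(m * β - z) := by ring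
  refine ⟨?_, ?_, fun m z hm hmz ↦ ?_⟩
  · simpa only [Int.cast_neg, hneg, neg_mul_neg] using h.error_mul_error_neg
  · simpa only [Int.cast_neg, hneg, abs_neg] using h.abs_error_lt
  · obtain ⟨z, rfl⟩ := neg_surjective z
    simpa only [Int.cast_neg, hneg, abs_neg] using h.abs_error_le m z hm (by simpa using hmz)

theorem error_neg_of_pos (h : IsBestApproxPair β q Q p P) (hE : 0 < Q * β - P) : q * β - p < 0 :=
  (pos_iff_neg_of_mul_neg h.error_mul_error_neg).1 hE

theorem abs_error_le_half (h : IsBestApproxPair β q Q p P) (hQ : 1 < Q) : |q * β - p| ≤ 1 / 2 := by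
  simpa using (h.abs_error_le 1 (round β) (by simpa using hQ) (by simp)).trans
    (by simpa using abs_sub_round β)

theorem abs_error_le_fract (h : IsBestApproxPair β q Q p P) {m : ℤ} (hm0 : m ≠ 0) (hm : |m| < Q) :
    |q * β - p| ≤ Int.fract (m * β) := by
  simpa [Int.self_sub_floor, abs_of_nonneg] using h.abs_error_le m ⌊m * β⌋ hm (.inl hm0)

theorem fract_add_abs_error_le_one (h : IsBestApproxPair β q Q p P) {m : ℤ} (hm : |m| < Q) :
    Int.fract (m * β) + |q * β - p| ≤ 1 := by
  have hne : m ≠ 0 ∨ ⌊m * β⌋ + 1 ≠ 0 := by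
    by_contra! hzero
    simp [hzero.1] at hzero
  have hle := h.abs_error_le m (⌊m * β⌋ + 1) hm hne
  have hfract := Int.floor_add_fract (m * β)
  have hlt := Int.fract_lt_one (m * β)
  push_cast at hle
  rw [abs_of_neg (a := m * β - (⌊m * β⌋ + 1)) (by linarith)] at hle
  linarith

theorem fract_add_abs_error_le_of_lt (h : IsBestApproxPair β q Q p P) {s t : ℕ} (hs : s < Q)
    (ht : t < Q) (hlt : Int.fract (-(s * β)) < Int.fract (-(t * β))) :
    Int.fract (-(s * β)) + |q * β - p| ≤ Int.fract (-(t * β)) := by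
  have hne : s ≠ t := by
    rintro rfl
    exact hlt.false
  have hle := h.abs_error_le (s - t) (⌊-(t * β)⌋ - ⌊-(s * β)⌋) (by rw [abs_lt]; omega)
    (.inl (by omega))
  have hdiff : ((s - t : ℤ) : ℝ) * β - ((⌊-(t * β)⌋ - ⌊-(s * β)⌋ : ℤ) : ℝ) =
      Int.fract (-(t * β)) - Int.fract (-(s * β)) := by
    rw [← Int.self_sub_floor, ← Int.self_sub_floor]
    push_cast
    ring
  rw [hdiff, abs_of_pos (sub_pos.2 hlt)] at hle
  linarith

theorem fract_sub_mul (h : IsBestApproxPair β q Q p P) (hE : 0 < Q * β - P) {t : ℕ} (ht : t < Q) :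
    Int.fract ((Q - t : ℕ) * β) = Int.fract (-(t * β)) + (Q * β - P) := by
  have hcut := h.fract_add_abs_error_le_one (m := -t) (by simpa using ht)
  have hEe := h.abs_error_lt
  rw [abs_of_pos hE] at hEe
  push_cast [neg_mul] at hcut
  rw [Int.fract_eq_iff]
  refine ⟨by positivity, by linarith, P + ⌊-(t * β)⌋, ?_⟩
  push_cast [Nat.cast_sub ht.le]
  linarith [Int.floor_add_fract (-(t * β))]

theorem exists_sameCell_of_pos (h : IsBestApproxPair β q Q p P) (hE : 0 < Q * β - P) (hn : n < Q)
    (b : ℕ) : ∃ a, 0 < a ∧ a ≤ Q ∧ SameCell β n a b := by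
  -- `-sβ` is the left endpoint of the cell of `bβ`.
  obtain ⟨s, hs, hmax⟩ := Finset.exists_max_image
    {t ∈ Finset.range (n + 1) | Int.fract (-((t : ℕ) * β)) ≤ Int.fract (b * β)}
    (fun t : ℕ ↦ Int.fract (-(t * β))) ⟨0, by simp⟩
  simp only [Finset.mem_filter, Finset.mem_range, Nat.lt_succ_iff] at hs hmax
  obtain ⟨hsn, hsb⟩ := hs
  refine ⟨Q - s, by omega, Nat.sub_le _ _, fun t ht ↦ ?_⟩
  rw [h.fract_sub_mul hE (hsn.trans_lt hn)]
  refine ⟨fun hle ↦ ?_, fun hle ↦ (hmax t ⟨ht, hle⟩).trans (by linarith)⟩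
  by_contra! hlt
  have hgap := h.fract_add_abs_error_le_of_lt (hsn.trans_lt hn) (ht.trans_lt hn) (hsb.trans_lt hlt)
  linarith [h.abs_error_lt, le_abs_self (Q * β - P)]

theorem not_sameCell_of_pos (h : IsBestApproxPair β q Q p P) (hE : 0 < Q * β - P) (hQ : 1 < Q)
    (hqn : q ≤ n) {a : ℕ} (ha0 : 0 < a) (ha : a < Q) : ¬ SameCell β n a Q := by
  intro hcell
  have hcut : Int.fract (-(q * β)) = |q * β - p| := by
    rw [Int.fract_eq_iff]
    refine ⟨abs_nonneg _, (h.abs_error_le_half hQ).trans_lt (by norm_num), -p, ?_⟩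
    rw [abs_of_neg (h.error_neg_of_pos hE)]
    push_cast
    ring
  have hQfract : Int.fract (Q * β) = Q * β - P := by
    simpa using h.fract_sub_mul hE (zero_lt_one.trans hQ)
  have hafract : |q * β - p| ≤ Int.fract (a * β) := by
    simpa using h.abs_error_le_fract (m := a) (by omega) (by simpa using ha)
  have hle := (hcell q hqn).1 (hcut.trans_le hafract)
  rw [hcut, hQfract] at hle
  exact h.abs_error_lt.not_ge (hle.trans (le_abs_self _))

theorem error_pos_or_neg_error_pos (h : IsBestApproxPair β q Q p P) :
    0 < Q * β - P ∨ 0 < Q * -β - (-P : ℤ) := by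
  rcases (left_ne_zero_of_mul h.error_mul_error_neg.ne).lt_or_gt with hE | hE
  · right
    push_cast
    linarith
  · exact .inl hE

theorem exists_sameCell (h : IsBestApproxPair β q Q p P) (hβ : Irrational β) (hn : n < Q) {b : ℕ}
    (hb : 0 < b) : ∃ a, 0 < a ∧ a ≤ Q ∧ SameCell β n a b := by
  rcases h.error_pos_or_neg_error_pos with hE | hE
  · exact h.exists_sameCell_of_pos hE hn b
  · obtain ⟨a, ha, haQ, hcell⟩ := h.neg.exists_sameCell_of_pos hE hn b
    exact ⟨a, ha, haQ, (sameCell_neg_iff hβ ha hb).1 hcell⟩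

theorem not_sameCell (h : IsBestApproxPair β q Q p P) (hβ : Irrational β) (hQ : 1 < Q)
    (hqn : q ≤ n) {a : ℕ} (ha0 : 0 < a) (ha : a < Q) : ¬ SameCell β n a Q := by
  rcases h.error_pos_or_neg_error_pos with hE | hE
  · exact h.not_sameCell_of_pos hE hQ hqn ha0 ha
  · rw [← sameCell_neg_iff hβ ha0 (ha0.trans ha)]
    exact h.neg.not_sameCell_of_pos hE hQ hqn ha0 ha

end IsBestApproxPair

section Words

variable {α : ℝ}

@[simp]
theorem length_word (α : ℝ) (m n : ℕ) : (word α m n).length = n := by simp [word]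

theorem forall_sub_eq_sub_iff {G : Type*} [AddCommGroup G] (f g : ℕ → G) (n : ℕ) :
    (∀ i < n, f (i + 1) - f i = g (i + 1) - g i) ↔ ∀ t ≤ n, f t - f 0 = g t - g 0 := by
  constructor
  · intro h t ht
    rw [← Finset.sum_range_sub, ← Finset.sum_range_sub]
    exact Finset.sum_congr rfl fun i hi ↦ h i ((Finset.mem_range.1 hi).trans_le ht)
  · intro h i hi
    rw [← sub_sub_sub_cancel_right (f (i + 1)) (f i) (f 0), h (i + 1) hi, h i hi.le,
      sub_sub_sub_cancel_right]

theorem v0_eq_v0_iff (h0 : 0 < α) (h1 : α < 1) (i j : ℤ) :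
    v0 α i = v0 α j ↔ ⌊((i + 1 : ℤ) : ℝ) * α⌋ - ⌊i * α⌋ = ⌊((j + 1 : ℤ) : ℝ) * α⌋ - ⌊j * α⌋ := by
  have hfract : Int.fract (-α) = 1 - α := by
    have hα : Int.fract α = α := Int.fract_eq_self.2 ⟨h0.le, h1⟩
    rw [Int.fract_neg (by rw [hα]; exact h0.ne'), hα]
  simp only [v0, decide_eq_decide, Int.cast_add, Int.cast_one, add_mul, one_mul,
    floor_add_sub_floor_eq_iff, hfract]

theorem word_eq_word_iff_v0 (α : ℝ) (m m' n : ℕ) :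
    word α m n = word α m' n ↔ ∀ i < n, v0 α (m + 1 + i) = v0 α (m' + 1 + i) := by
  have hmem (j : ℤ) : j ∈ (List.range n : List ℤ) ↔ ∃ i < n, (i : ℤ) = j := by simp [eq_comm]
  simp only [word, List.map_inj_left, hmem, forall_exists_index, and_imp, forall_apply_eq_imp_iff₂]

theorem word_eq_word_iff_sameCell (h0 : 0 < α) (h1 : α < 1) (m m' n : ℕ) :
    word α m n = word α m' n ↔ SameCell α n (m + 1) (m' + 1) := by
  rw [sameCell_iff_floor, word_eq_word_iff_v0]
  have htelescope := forall_sub_eq_sub_iff (fun t : ℕ ↦ ⌊((m + 1 + t : ℕ) : ℝ) * α⌋)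
    (fun t : ℕ ↦ ⌊((m' + 1 + t : ℕ) : ℝ) * α⌋) n
  simp only [add_zero] at htelescope
  rw [← htelescope]
  refine forall₂_congr fun i _ ↦ ?_
  rw [v0_eq_v0_iff h0 h1]
  push_cast
  simp only [add_assoc]

theorem exhaust_eq_add {M n : ℕ} (hall : ∀ m, ∃ m' ≤ M, word α m n = word α m' n)
    (hnew : ∀ m < M, word α m n ≠ word α M n) : exhaust α n = M + n := by
  refine IsLeast.csInf_eq ⟨?_, fun N hN ↦ ?_⟩
  · rintro w rfl ⟨m, hm⟩
    obtain ⟨m', hm', heq⟩ := hall m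
    exact ⟨m', Nat.add_le_add_right hm' _, hm.trans heq⟩
  · obtain ⟨m, hmN, hm⟩ := hN (word α M n) (length_word ..) ⟨M, by simp⟩
    rw [length_word] at hmN hm
    have hMm : M ≤ m := not_lt.1 fun hlt ↦ hnew m hlt hm.symm
    omega

end Words

/-- For `n ≥ 2` and `k ≥ 0` with `q_k ≤ n ≤ q_{k+1} - 1`, writing
`n = q_k + j`, one has `f(n) = q_{k+1} + q_k - 1 + j`.
(Here `qd α (k+1) = q_k`.) -/
theorem exhaust_eq (α : ℝ) (hirr : Irrational α) (h0 : 0 < α) (h1 : α < 1)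
    (n k : ℕ) (hn : 2 ≤ n) (hlow : qd α (k+1) ≤ n) (hhigh : n ≤ qd α (k+2) - 1) :
    exhaust α n = qd α (k+2) + qd α (k+1) - 1 + (n - qd α (k+1)) := by
  have hpair : IsBestApproxPair α (qd α (k + 1)) (qd α (k + 2)) _ _ :=
    isBestApproxPair_qd hirr h0 h1 (k + 1)
  have hpos := qd_succ_pos hirr h0 h1 k
  rw [show qd α (k + 2) + qd α (k + 1) - 1 + (n - qd α (k + 1)) = qd α (k + 2) - 1 + n by omega]
  refine exhaust_eq_add (fun m ↦ ?_) (fun m hm heq ↦ ?_)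
  · obtain ⟨a, ha0, haQ, hcell⟩ := hpair.exists_sameCell hirr (n := n) (by omega) m.succ_pos
    obtain ⟨m', rfl⟩ := Nat.exists_eq_add_of_le' ha0
    exact ⟨m', by omega, ((word_eq_word_iff_sameCell h0 h1 m' m n).2 hcell).symm⟩
  · rw [word_eq_word_iff_sameCell h0 h1, Nat.sub_add_cancel (by omega)] at heq
    exact hpair.not_sameCell hirr (by omega) hlow m.succ_pos (by omega) heq

end
end

section
/- For every integer n ≥ 2, f(n) = max(f(n−1) + 1, g(n)); equivalently, f(n) is the least integer N satisfying both N ≥ f(n−1) + 1 and N ≥ g(n). -/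
open scoped Classical

noncomputable section

/-!
Deleting the last letter of a factor of length `k + 1` gives a factor of length `k` that ends one
letter earlier; conversely an occurrence of a factor `u` extends by the letter that follows it, and
unless `u` is right special this is the only letter that can follow. Hence a prefix of length
`N + 1` contains all factors of length `k + 1` exactly when its first `N` letters contain all
factors of length `k` and it contains every extension of every right special factor of length `k`.

The right special factor is unique because the circle map sequence is balanced: the number of
ones in a block of length `n` is `⌊y + nα⌋ - ⌊y⌋`, which takes at most two consecutive values. Of
two distinct right special words, the suffixes that start at their last disagreement are `1s` and
`0s`, and then `1s1` and `0s0` are factors of equal length whose numbers of ones differ by two.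
-/

section Words

variable {A : Type*}

/-- The factor language of the one-sided infinite word `x`: the finite words occurring in it. -/
def factors (x : Stream' A) : Set (List A) := {w | ∃ N, w <:+: x.take N}

/-- The factors of `x` having exactly `n` letters. -/
def factorsOfLength (x : Stream' A) (n : ℕ) : Set (List A) :=
  {w | w.length = n ∧ w ∈ factors x}

/-- The word `u` is right special in the language `L`: it can be followed by at least two
different letters. -/
def IsRightSpecial (L : Set (List A)) (u : List A) : Prop := {b | u ++ [b] ∈ L}.Nontrivial

/-- The one-letter extensions, within the language of `x`, of the right special factors of
length `k`. -/
def specialExtensions (x : Stream' A) (k : ℕ) : Set (List A) :=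
  {w ∈ factors x | ∃ u b, u.length = k ∧ IsRightSpecial (factors x) u ∧ w = u ++ [b]}

/-- The least length of a prefix of `x` in which every word of `W` occurs. It is the junk value `0`
when no prefix contains all of `W`. -/
def coverLength (x : Stream' A) (W : Set (List A)) : ℕ := sInf {N | ∀ w ∈ W, w <:+: x.take N}

theorem csInf_le_iff_mem_of_isUpperSet {ι : Type*} [ConditionallyCompleteLinearOrderBot ι]
    [WellFoundedLT ι] {S : Set ι} (hS : IsUpperSet S) (hne : S.Nonempty) {i : ι} :
    sInf S ≤ i ↔ i ∈ S :=
  ⟨fun h => hS h (csInf_mem hne), fun h => csInf_le' h⟩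

theorem IsRightSpecial.of_cons {L : Set (List A)} (hsuffix : ∀ v w, v <:+ w → w ∈ L → v ∈ L)
    {a : A} {u : List A} (hu : IsRightSpecial L (a :: u)) : IsRightSpecial L u :=
  hu.mono fun _ => hsuffix _ _ (List.suffix_cons _ _)

variable {x : Stream' A}

theorem isInfix_take_mono {w : List A} {M N : ℕ} (hMN : M ≤ N) (hw : w <:+: x.take M) :
    w <:+: x.take N :=
  hw.trans (Stream'.take_prefix_take_left _ _ _ hMN).isInfix

theorem isInfix_take_iff {w : List A} {N : ℕ} :
    w <:+: x.take N ↔ ∃ m, m + w.length ≤ N ∧ w = (x.drop m).take w.length := by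
  constructor
  · rintro ⟨p, s, hps⟩
    have hlen : p.length + w.length + s.length = N := by
      simpa [add_assoc] using congrArg List.length hps
    refine ⟨p.length, by omega, ?_⟩
    rw [← hlen, Stream'.take_add, Stream'.take_add] at hps
    exact (List.append_inj (List.append_inj hps (by simp)).1 (by simp)).2
  · rintro ⟨m, hm, hw⟩
    refine isInfix_take_mono hm ?_
    rw [Stream'.take_add, ← hw]
    exact (List.suffix_append _ _).isInfix

theorem mem_factors_iff {w : List A} :
    w ∈ factors x ↔ ∃ m, w = (x.drop m).take w.length := by
  constructor
  · rintro ⟨N, hw⟩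
    obtain ⟨m, -, hm⟩ := isInfix_take_iff.1 hw
    exact ⟨m, hm⟩
  · rintro ⟨m, hm⟩
    exact ⟨m + w.length, isInfix_take_iff.2 ⟨m, le_rfl, hm⟩⟩

theorem mem_factors_of_isInfix {v w : List A} (hvw : v <:+: w) (hw : w ∈ factors x) :
    v ∈ factors x :=
  hw.imp fun _ => hvw.trans

theorem isInfix_take_of_append_singleton {u : List A} {b : A} {N : ℕ}
    (h : u ++ [b] <:+: x.take (N + 1)) : u <:+: x.take N := by
  obtain ⟨m, hm, hub⟩ := isInfix_take_iff.1 h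
  rw [List.length_append, List.length_singleton] at hm hub
  rw [Stream'.take_succ'] at hub
  exact isInfix_take_iff.2 ⟨m, by omega, (List.append_inj' hub rfl).1⟩

theorem exists_append_singleton_isInfix_take {u : List A} {N : ℕ} (hu : u <:+: x.take N) :
    ∃ b, u ++ [b] <:+: x.take (N + 1) := by
  obtain ⟨m, hm, hum⟩ := isInfix_take_iff.1 hu
  refine ⟨(x.drop m).get u.length, isInfix_take_iff.2 ⟨m, ?_, ?_⟩⟩
  · rw [List.length_append, List.length_singleton]
    omega
  · rw [List.length_append, List.length_singleton, Stream'.take_succ', ← hum]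

theorem forall_factorsOfLength_succ_iff {k N : ℕ} :
    (∀ w ∈ factorsOfLength x (k + 1), w <:+: x.take (N + 1)) ↔
      (∀ u ∈ factorsOfLength x k, u <:+: x.take N) ∧
        ∀ w ∈ specialExtensions x k, w <:+: x.take (N + 1) := by
  constructor
  · refine fun h => ⟨?_, ?_⟩
    · rintro u ⟨rfl, M, hu⟩
      obtain ⟨b, hub⟩ := exists_append_singleton_isInfix_take hu
      exact isInfix_take_of_append_singleton (h _ ⟨by simp, _, hub⟩)
    · rintro w ⟨hw, u, b, rfl, -, rfl⟩
      exact h _ ⟨by simp, hw⟩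
  · rintro ⟨hshort, hspecial⟩ w ⟨hlen, hw⟩
    obtain ⟨u, b, rfl⟩ := List.eq_nil_or_concat' w |>.resolve_left (by rintro rfl; simp at hlen)
    have hulen : u.length = k := by simpa using hlen
    have hu : u ∈ factors x := mem_factors_of_isInfix (List.prefix_append _ _).isInfix hw
    by_cases hspec : IsRightSpecial (factors x) u
    · exact hspecial _ ⟨hw, u, b, hulen, hspec, rfl⟩
    · obtain ⟨c, huc⟩ := exists_append_singleton_isInfix_take (hshort u ⟨hulen, hu⟩)
      obtain rfl : b = c := Set.not_nontrivial_iff.1 hspec hw ⟨_, huc⟩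
      exact huc

theorem coverLength_le_iff {W : Set (List A)} (hfin : W.Finite) (hW : W ⊆ factors x) {N : ℕ} :
    coverLength x W ≤ N ↔ ∀ w ∈ W, w <:+: x.take N := by
  have hupper : IsUpperSet {N | ∀ w ∈ W, w <:+: x.take N} :=
    fun _ _ hMN h w hw => isInfix_take_mono hMN (h w hw)
  refine csInf_le_iff_mem_of_isUpperSet hupper ?_
  choose! F hF using hW
  obtain ⟨B, hB⟩ := (hfin.image F).bddAbove
  exact ⟨B, fun w hw => isInfix_take_mono (hB ⟨w, hw, rfl⟩) (hF hw)⟩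

theorem coverLength_factorsOfLength_succ [Finite A] (x : Stream' A) (k : ℕ) :
    coverLength x (factorsOfLength x (k + 1)) =
      max (coverLength x (factorsOfLength x k) + 1) (coverLength x (specialExtensions x k)) := by
  have hfin (n : ℕ) : (factorsOfLength x n).Finite :=
    (List.finite_length_eq A n).subset fun _ hw => hw.1
  have hsub {n : ℕ} : factorsOfLength x n ⊆ factors x := fun _ hw => hw.2
  have hfin' : (specialExtensions x k).Finite :=
    (hfin (k + 1)).subset fun w ⟨hw, u, b, hu, _, hub⟩ => ⟨by simp [hub, hu], hw⟩
  refine eq_of_forall_ge_iff fun N => ?_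
  rw [max_le_iff, coverLength_le_iff (hfin _) hsub, coverLength_le_iff hfin' (Set.sep_subset _ _)]
  cases N with
  | zero =>
    have hprefix : x.take (k + 1) ∈ factorsOfLength x (k + 1) :=
      ⟨Stream'.length_take _ _, k + 1, List.infix_rfl⟩
    refine iff_of_false (fun h => ?_) (by simp)
    simpa using (h _ hprefix).length_le
  | succ N =>
    rw [Nat.succ_le_succ_iff, coverLength_le_iff (hfin _) hsub,
      forall_factorsOfLength_succ_iff]

end Words

section Balanced

/-- A binary language is balanced if the numbers of ones in two of its words of equal length
differ by at most one. Exchanging the two words makes the one-sided inequality symmetric. -/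
def IsBalanced (L : Set (List Bool)) : Prop :=
  ∀ u ∈ L, ∀ v ∈ L, u.length = v.length → u.count true ≤ v.count true + 1

variable {L : Set (List Bool)}

theorem isRightSpecial_bool_iff {u : List Bool} :
    IsRightSpecial L u ↔ u ++ [true] ∈ L ∧ u ++ [false] ∈ L := by
  constructor
  · rintro ⟨b, hb, c, hc, hbc⟩
    cases b <;> cases c <;> simp_all
  · rintro ⟨htrue, hfalse⟩
    exact ⟨true, htrue, false, hfalse, by simp⟩

theorem IsBalanced.not_isRightSpecial_false_cons (hbal : IsBalanced L) {s : List Bool}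
    (htrue : IsRightSpecial L (true :: s)) : ¬ IsRightSpecial L (false :: s) := fun hfalse => by
  have h := hbal _ (isRightSpecial_bool_iff.1 htrue).1 _ (isRightSpecial_bool_iff.1 hfalse).2
    (by simp)
  simp at h

theorem IsBalanced.eq_of_isRightSpecial (hbal : IsBalanced L)
    (hsuffix : ∀ v w, v <:+ w → w ∈ L → v ∈ L) {u t : List Bool} (hlen : u.length = t.length)
    (hu : IsRightSpecial L u) (ht : IsRightSpecial L t) : u = t := by
  induction u generalizing t with
  | nil => exact (List.length_eq_zero_iff.1 hlen.symm).symm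
  | cons a u ih =>
    obtain ⟨b, t, rfl⟩ := List.exists_cons_of_length_eq_add_one hlen.symm
    obtain rfl : u = t := ih (by simpa using hlen) (hu.of_cons hsuffix) (ht.of_cons hsuffix)
    cases a <;> cases b
    · rfl
    · exact absurd hu (hbal.not_isRightSpecial_false_cons ht)
    · exact absurd ht (hbal.not_isRightSpecial_false_cons hu)
    · rfl

theorem IsBalanced.specialExtensions_eq {x : Stream' Bool} (hbal : IsBalanced (factors x))
    {t : List Bool} (ht : IsRightSpecial (factors x) t) :
    specialExtensions x t.length = {t ++ [true], t ++ [false]} := by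
  obtain ⟨htrue, hfalse⟩ := isRightSpecial_bool_iff.1 ht
  refine Set.Subset.antisymm ?_ (Set.pair_subset ⟨htrue, t, true, rfl, ht, rfl⟩
    ⟨hfalse, t, false, rfl, ht, rfl⟩)
  rintro _ ⟨-, u, b, hlen, hu, rfl⟩
  obtain rfl := hbal.eq_of_isRightSpecial
    (fun _ _ hvw => mem_factors_of_isInfix hvw.isInfix) hlen hu ht
  cases b <;> simp

end Balanced

section CircleMap

/-- The one-sided sequence `v₀(1), v₀(2), …`; its letter number `i` is `v₀(i + 1)`. -/
def circleStream (α : ℝ) : Stream' Bool := fun i => v0 α (i + 1)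

theorem get_drop_circleStream (α : ℝ) (m n : ℕ) :
    ((circleStream α).drop m).get n = v0 α (m + 1 + n) := by
  rw [Stream'.get_drop, Stream'.get, circleStream]
  congr 1
  push_cast
  ring

theorem v0_toInt_eq_floor_sub_floor {α : ℝ} (h0 : 0 ≤ α) (h1 : α ≤ 1) (p : ℤ) :
    (v0 α p).toInt = ⌊p * α + α⌋ - ⌊p * α⌋ := by
  have hfloor : ⌊p * α + α⌋ = ⌊p * α⌋ + ⌊Int.fract (p * α) + α⌋ := by
    rw [← Int.floor_intCast_add, ← add_assoc, Int.floor_add_fract]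
  have hlt := Int.fract_lt_one (p * α)
  have hnonneg := Int.fract_nonneg (p * α)
  rw [hfloor, add_sub_cancel_left, eq_comm, Int.floor_eq_iff]
  by_cases h : 1 - α ≤ Int.fract (p * α)
  · simp only [v0, h, decide_true, Bool.toInt_true, Int.cast_one]
    constructor <;> linarith
  · simp only [v0, h, decide_false, Bool.toInt_false, Int.cast_zero]
    constructor <;> linarith

theorem count_true_take_drop_circleStream {α : ℝ} (h0 : 0 ≤ α) (h1 : α ≤ 1) (m n : ℕ) :
    ((((circleStream α).drop m).take n).count true : ℤ) =
      ⌊(m + 1) * α + n * α⌋ - ⌊(m + 1) * α⌋ := by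
  induction n with
  | zero => simp
  | succ n ih =>
    have hcount (b : Bool) : (([b].count true : ℕ) : ℤ) = b.toInt := by cases b <;> rfl
    rw [Stream'.take_succ', List.count_append, Nat.cast_add, ih,
      get_drop_circleStream, hcount, v0_toInt_eq_floor_sub_floor h0 h1]
    push_cast
    ring_nf

theorem isBalanced_factors_circleStream {α : ℝ} (h0 : 0 ≤ α) (h1 : α ≤ 1) :
    IsBalanced (factors (circleStream α)) := by
  intro u hu v hv hlen
  obtain ⟨m, hm⟩ := mem_factors_iff.1 hu
  obtain ⟨r, hr⟩ := mem_factors_iff.1 hv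
  have hcu := count_true_take_drop_circleStream h0 h1 m u.length
  have hcv := count_true_take_drop_circleStream h0 h1 r v.length
  rw [← hm] at hcu
  rw [← hr, ← hlen] at hcv
  have hupper := Int.le_floor_add_floor (((m : ℝ) + 1) * α) (u.length * α)
  have hlower := Int.le_floor_add (((r : ℝ) + 1) * α) (u.length * α)
  omega

theorem word_eq_take_drop (α : ℝ) (m n : ℕ) :
    word α m n = ((circleStream α).drop m).take n := by
  have word_succ (n : ℕ) : word α m (n + 1) = word α m n ++ [v0 α (m + 1 + n)] := by
    simp [word, List.range_succ]
  induction n with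
  | zero => rfl
  | succ n ih => rw [word_succ, Stream'.take_succ', ih, get_drop_circleStream]

theorem isFactor_iff {α : ℝ} {w : List Bool} : IsFactor α w ↔ w ∈ factors (circleStream α) := by
  simp only [IsFactor, word_eq_take_drop, mem_factors_iff]

theorem occursIn_iff {α : ℝ} {w : List Bool} {N : ℕ} :
    OccursIn α w N ↔ w <:+: (circleStream α).take N := by
  simp only [OccursIn, word_eq_take_drop, isInfix_take_iff]

theorem exhaust_eq_coverLength (α : ℝ) (n : ℕ) :
    exhaust α n = coverLength (circleStream α) (factorsOfLength (circleStream α) n) := by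
  simp only [exhaust, coverLength, factorsOfLength, isFactor_iff, occursIn_iff, Set.mem_ofPred_eq,
    and_imp]

theorem sInf_occursIn_pair_eq_coverLength (α : ℝ) (u v : List Bool) :
    sInf {N | OccursIn α u N ∧ OccursIn α v N} = coverLength (circleStream α) {u, v} := by
  simp [coverLength, occursIn_iff]

theorem exhaust_eq_max_general {α : ℝ} (h0 : 0 ≤ α) (h1 : α ≤ 1) {t : List Bool}
    (ht1 : IsFactor α (t ++ [true])) (ht0 : IsFactor α (t ++ [false])) :
    exhaust α (t.length + 1) =
      max (exhaust α t.length + 1)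
        (sInf {N | OccursIn α (t ++ [true]) N ∧ OccursIn α (t ++ [false]) N}) := by
  have ht : IsRightSpecial (factors (circleStream α)) t :=
    isRightSpecial_bool_iff.2 ⟨isFactor_iff.1 ht1, isFactor_iff.1 ht0⟩
  rw [exhaust_eq_coverLength, exhaust_eq_coverLength, sInf_occursIn_pair_eq_coverLength,
    coverLength_factorsOfLength_succ,
    (isBalanced_factors_circleStream h0 h1).specialExtensions_eq ht]

end CircleMap

/-- For `n ≥ 2`, `f(n) = max (f(n-1) + 1) (g(n))`, where `g(n)` is the
least `N` such that both `t_{n-1}1` and `t_{n-1}0` occur in `(v₀(1), …, v₀(N))`,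
`t_{n-1}` being the (unique) right special factor of length `n-1`. -/
theorem exhaust_eq_max (α : ℝ) (hirr : Irrational α) (h0 : 0 < α) (h1 : α < 1)
    (n : ℕ) (hn : 2 ≤ n) (t : List Bool) (hlen : t.length = n - 1)
    (ht1 : IsFactor α (t ++ [true])) (ht0 : IsFactor α (t ++ [false])) :
    exhaust α n =
      max (exhaust α (n - 1) + 1)
        (sInf {N | OccursIn α (t ++ [true]) N ∧ OccursIn α (t ++ [false]) N}) := by
  obtain rfl : n = t.length + 1 := by omega
  exact exhaust_eq_max_general h0.le h1.le ht1 ht0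

end
end

section
/- Let k ≥ 2, 0 ≤ j ≤ F_{k−1} − 1, and n = F_k + j. For every v ∈ Ω and every factor w of v₀ of length n, the frequency lim_{N→∞} (1/N)·#{1 ≤ m ≤ N : (v(m), …, v(m+n−1)) = w} exists and belongs to {τ^{−(k−1)}, τ^{−k}, τ^{−(k+1)}}. The frequency equals τ^{−(k−1)} precisely for the F_{k−1} − j − 1 factors that occur in the prefix (v₀(1), …, v₀(F_{k+1} − 2)); exactly F_{k−2} + j + 1 factors have frequency τ^{−k}, and exactly j + 1 factors have frequency τ^{−(k+1)}. -/
open scoped Classical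

noncomputable section

/-- Fibonacci numbers with `F 0 = 1`, `F 1 = 1`, `F 2 = 2`. -/
def F (n : ℕ) : ℕ := Nat.fib (n + 1)

/-- `v` has frequency `L` of the word `w`: the proportion of positions `1 ≤ m ≤ N` where
`(v(m), …, v(m + |w| - 1)) = w` tends to `L`. -/
def HasFreq (v : ℤ → Bool) (w : List Bool) (L : ℝ) : Prop :=
  Filter.Tendsto
    (fun N : ℕ =>
      (((Finset.Icc 1 N).filter (fun m : ℕ => wordAt v (m : ℤ) w.length = w)).card : ℝ) / N)
    Filter.atTop (nhds L)

/-!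
Put the orbit `p α` on the circle `ℝ / ℤ`. The letter `v₀(p)` records the increment of the
representative of `p α` in `[0, 1)`, so the factor of length `n` read at position `p` determines,
and is determined by, which of the points `p α, …, (p + n) α` has the smallest representative.
The index `i` of that point is the same as the arc containing `p α` among the `n + 1` arcs cut out
by `0, -α, …, -n α`, namely the arc starting at `-i α`.

By the three-gap theorem these arcs have lengths `x`, `y` and `x + y`, where `x` and `y` are the
distances of `q α` and `q' α` to the integers for the denominators `q`, `q'` of the Farey neighbours
of `α` of order `n`. Both endpoints of an arc lie on one orbit, so the number of visits to it
differs from its expected value by a bounded amount, uniformly in the starting point; hence each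
factor has its arc length as frequency in every element of the hull. For the inverse golden ratio
the Farey neighbours have consecutive Fibonacci denominators.
-/

open scoped goldenRatio

section FractionalPart

theorem fract_sub_of_fract_le {s t : ℝ} (h : Int.fract t ≤ Int.fract s) :
    Int.fract (s - t) = Int.fract s - Int.fract t := by
  refine Int.fract_eq_iff.2 ⟨sub_nonneg.2 h, ?_, ⌊s⌋ - ⌊t⌋, ?_⟩
  · linarith [Int.fract_lt_one s, Int.fract_nonneg t]
  · push_cast
    linarith [Int.floor_add_fract s, Int.floor_add_fract t]

theorem ite_fract_lt (t : ℝ) {c : ℝ} (hc : c ∈ Set.Icc 0 1) :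
    (if Int.fract t < c then 1 else 0) = c + (Int.fract (t - c) - Int.fract t) := by
  have ht := Int.floor_add_fract t
  split_ifs with h
  · have : Int.fract (t - c) = Int.fract t - c + 1 :=
      Int.fract_eq_iff.2 ⟨by linarith [Int.fract_nonneg t, hc.2], by linarith, ⌊t⌋ - 1,
        by push_cast; linarith⟩
    linarith
  · have : Int.fract (t - c) = Int.fract t - c :=
      Int.fract_eq_iff.2 ⟨by linarith, by linarith [Int.fract_lt_one t, hc.1], ⌊t⌋, by linarith⟩
    linarith

end FractionalPart

section BoundedRemainder

theorem abs_sum_Icc_add_natCast_sub_le {f : ℤ → ℝ} (hf : ∀ p, f p ∈ Set.Icc 0 1) (d N : ℕ) :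
    |∑ m ∈ Finset.Icc 1 N, (f (m + d) - f m)| ≤ d := by
  have telescope : ∑ m ∈ Finset.Icc 1 N, (f (m + d) - f m) =
      ∑ i ∈ Finset.range d, (f ((N + 1 : ℕ) + i) - f ((1 : ℕ) + i)) := by
    calc ∑ m ∈ Finset.Icc 1 N, (f (m + d) - f m)
      _ = ∑ m ∈ Finset.Icc 1 N, ∑ i ∈ Finset.range d, (f (m + (i + 1 : ℕ)) - f (m + i)) :=
        Finset.sum_congr rfl fun m _ => by
          rw [Finset.sum_range_sub fun i : ℕ => f (m + i), Nat.cast_zero, add_zero]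
      _ = ∑ i ∈ Finset.range d, ∑ m ∈ Finset.Icc 1 N, (f ((m + 1 : ℕ) + i) - f (m + i)) := by
        rw [Finset.sum_comm]
        simp only [Nat.cast_add, Nat.cast_one, add_assoc, add_comm (1 : ℤ)]
      _ = ∑ i ∈ Finset.range d, (f ((N + 1 : ℕ) + i) - f ((1 : ℕ) + i)) :=
        Finset.sum_congr rfl fun i _ => by
          rw [← Finset.Ico_add_one_right_eq_Icc,
            Finset.sum_Ico_sub (fun m : ℕ => f (m + i)) (by omega)]
  calc |∑ m ∈ Finset.Icc 1 N, (f (m + d) - f m)|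
    _ ≤ ∑ i ∈ Finset.range d, |f ((N + 1 : ℕ) + i) - f ((1 : ℕ) + i)| :=
      telescope ▸ Finset.abs_sum_le_sum_abs _ _
    _ ≤ ∑ _i ∈ Finset.range d, (1 : ℝ) := Finset.sum_le_sum fun i _ => by
      simpa using abs_sub_le_of_nonneg_of_le (hf _).1 (hf _).2 (hf _).1 (hf _).2
    _ = d := by simp

theorem abs_sum_Icc_add_intCast_sub_le {f : ℤ → ℝ} (hf : ∀ p, f p ∈ Set.Icc 0 1) (d : ℤ) (N : ℕ) :
    |∑ m ∈ Finset.Icc 1 N, (f (m + d) - f m)| ≤ |(d : ℝ)| := by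
  obtain ⟨e, rfl | rfl⟩ := d.eq_nat_or_neg
  · simpa using abs_sum_Icc_add_natCast_sub_le hf e N
  · have := abs_sum_Icc_add_natCast_sub_le (fun p => hf (p + -e)) e N
    rw [← abs_neg, ← Finset.sum_neg_distrib]
    simpa using this

/-- Hecke's theorem: an arc whose length lies in `ℤ α + ℤ` has bounded discrepancy. -/
theorem abs_card_fract_lt_sub_le {α c : ℝ} (hc : c ∈ Set.Icc 0 1) {a b : ℤ} (hab : c = a * α + b)
    (t : ℝ) (N : ℕ) :
    |(((Finset.Icc 1 N).filter fun m : ℕ => Int.fract (m * α + t) < c).card : ℝ) - N * c| ≤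
      |(a : ℝ)| := by
  set f : ℤ → ℝ := fun p => Int.fract (p * α + t)
  have coboundary (m : ℕ) :
      (if Int.fract (m * α + t) < c then 1 else 0) = c + (f (m + -a) - f m) := by
    rw [ite_fract_lt _ hc, ← Int.fract_add_intCast _ b]
    simp only [f, hab]
    push_cast
    congr 3
    ring
  have hsum : (((Finset.Icc 1 N).filter fun m : ℕ => Int.fract (m * α + t) < c).card : ℝ) =
      N * c + ∑ m ∈ Finset.Icc 1 N, (f (m + -a) - f m) := by
    simp only [Finset.card_filter, Nat.cast_sum, Nat.cast_ite, Nat.cast_one, Nat.cast_zero,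
      coboundary, Finset.sum_add_distrib, Finset.sum_const, Nat.card_Icc, add_tsub_cancel_right,
      nsmul_eq_mul]
  rw [hsum, add_sub_cancel_left]
  simpa using abs_sum_Icc_add_intCast_sub_le (f := f)
    (fun p => ⟨Int.fract_nonneg _, (Int.fract_lt_one _).le⟩) (-a) N

theorem tendsto_div_of_abs_sub_le {c : ℕ → ℝ} {L K : ℝ} (h : ∀ N : ℕ, |c N - N * L| ≤ K) :
    Filter.Tendsto (fun N : ℕ => c N / N) Filter.atTop (nhds L) := by
  refine tendsto_iff_norm_sub_tendsto_zero.2 <| squeeze_zero' (.of_forall fun _ => norm_nonneg _) ?_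
    (tendsto_const_div_atTop_nhds_zero_nat K)
  filter_upwards [Filter.eventually_gt_atTop 0] with N hN
  have hN' : (0 : ℝ) < N := by exact_mod_cast hN
  calc ‖c N / N - L‖
    _ = |c N - N * L| / N := by
      rw [Real.norm_eq_abs, div_sub' hN'.ne', abs_div, abs_of_pos hN']
    _ ≤ K / N := by gcongr; exact h N

end BoundedRemainder

section Words

theorem wordAt_eq_wordAt_iff {v v' : ℤ → Bool} {p p' : ℤ} {n : ℕ} :
    wordAt v p n = wordAt v' p' n ↔ ∀ i < n, v (p + i) = v' (p' + i) := by
  simp only [wordAt, List.map_inj_left]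
  simp +contextual [forall_comm (α := ℤ)]

theorem length_wordAt (v : ℤ → Bool) (p : ℤ) (n : ℕ) : (wordAt v p n).length = n := by
  simp [wordAt]

theorem word_eq_wordAt (α : ℝ) (m n : ℕ) : word α m n = wordAt (v0 α) (m + 1) n := rfl

theorem v0_mem_hull (α : ℝ) : v0 α ∈ hull α :=
  subset_closure ⟨0, by simp⟩

theorem exists_eq_translate_of_mem_hull {α : ℝ} {v : ℤ → Bool} (hv : v ∈ hull α) (S : Finset ℤ) :
    ∃ M : ℤ, ∀ p ∈ S, v p = v0 α (p - M) := by
  have hopen : IsOpen ((S : Set ℤ).pi fun p => ({v p} : Set Bool)) :=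
    isOpen_set_pi S.finite_toSet fun _ _ => isOpen_discrete _
  obtain ⟨_, hu, M, rfl⟩ := mem_closure_iff.1 hv _ hopen (by simp)
  exact ⟨M, fun p hp => (hu p hp).symm⟩

theorem HasFreq.exists_wordAt_eq {v : ℤ → Bool} {w : List Bool} {L : ℝ} (h : HasFreq v w L)
    (hL : L ≠ 0) : ∃ m : ℕ, wordAt v (m + 1) w.length = w := by
  by_contra! hne
  refine hL (tendsto_nhds_unique h (tendsto_const_nhds.congr fun N => ?_))
  rw [Finset.filter_false_of_mem, Finset.card_empty, Nat.cast_zero, zero_div]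
  intro m hm
  obtain ⟨m, rfl⟩ := Nat.exists_eq_add_of_le' (Finset.mem_Icc.1 hm).1
  exact_mod_cast hne m

end Words

section Coding

/-- The point `p α` of the circle `ℝ / ℤ`, represented in `[0, 1)`. -/
def orbit (α : ℝ) (p : ℤ) : ℝ := Int.fract (p * α)

theorem orbit_nonneg (α : ℝ) (p : ℤ) : 0 ≤ orbit α p := Int.fract_nonneg _

theorem orbit_lt_one (α : ℝ) (p : ℤ) : orbit α p < 1 := Int.fract_lt_one _

theorem orbit_zero (α : ℝ) : orbit α 0 = 0 := by simp [orbit]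

theorem orbit_add_one {α : ℝ} (hα : α ∈ Set.Icc 0 1) (p : ℤ) :
    orbit α (p + 1) = orbit α p + α - if v0 α p then 1 else 0 := by
  have h0 := orbit_nonneg α p
  have h1 := orbit_lt_one α p
  have hfloor : ⌊(p : ℝ) * α⌋ + orbit α p = p * α := Int.floor_add_fract _
  rw [orbit, Int.fract_eq_iff]
  simp only [v0, decide_eq_true_eq]
  split_ifs with hc <;> rw [← orbit] at hc
  · exact ⟨by linarith, by linarith [hα.2], ⌊(p : ℝ) * α⌋ + 1, by push_cast; linarith⟩
  · exact ⟨by linarith [hα.1], by linarith, ⌊(p : ℝ) * α⌋, by push_cast; linarith⟩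

theorem v0_eq_v0_iff_s7 {α : ℝ} (hα : α ∈ Set.Icc 0 1) {p p' : ℤ} :
    v0 α p = v0 α p' ↔ orbit α (p + 1) - orbit α p = orbit α (p' + 1) - orbit α p' := by
  rw [orbit_add_one hα, orbit_add_one hα]
  cases v0 α p <;> cases v0 α p' <;> grind

theorem wordAt_v0_eq_iff_orbit {α : ℝ} (hα : α ∈ Set.Icc 0 1) {p p' : ℤ} {n : ℕ} :
    wordAt (v0 α) p n = wordAt (v0 α) p' n ↔
      ∀ i ≤ n, orbit α (p + i) - orbit α p = orbit α (p' + i) - orbit α p' := by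
  simp only [wordAt_eq_wordAt_iff, v0_eq_v0_iff_s7 hα, add_assoc]
  constructor
  · intro h i hi
    induction i with
    | zero => simp
    | succ i ih =>
      push_cast
      linarith [h i hi, ih (by omega)]
  · intro h i hi
    have hsucc := h (i + 1) hi
    push_cast at hsucc
    linarith [h i hi.le]

theorem exists_orbit_le (α : ℝ) (n : ℕ) (p : ℤ) :
    ∃ i ≤ n, ∀ i' ≤ n, orbit α (p + i) ≤ orbit α (p + i') := by
  simpa [Nat.lt_succ_iff] using
    (Finset.range (n + 1)).exists_min_image (fun i : ℕ => orbit α (p + i)) ⟨0, by simp⟩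

/-- An index `i ≤ n` for which `(p + i) α` has the smallest representative in `[0, 1)` among
`p α, …, (p + n) α`. It labels the arc containing `p α` of the circle cut at `0, -α, …, -n α`. -/
def minIdx (α : ℝ) (n : ℕ) (p : ℤ) : ℕ := (exists_orbit_le α n p).choose

theorem minIdx_le (α : ℝ) (n : ℕ) (p : ℤ) : minIdx α n p ≤ n :=
  (exists_orbit_le α n p).choose_spec.1

theorem orbit_add_minIdx_le (α : ℝ) (p : ℤ) {n i : ℕ} (hi : i ≤ n) :
    orbit α (p + minIdx α n p) ≤ orbit α (p + i) :=
  (exists_orbit_le α n p).choose_spec.2 i hi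

theorem orbit_sub_orbit_minIdx (α : ℝ) (p : ℤ) {n i : ℕ} (hi : i ≤ n) :
    orbit α (p + i) - orbit α (p + minIdx α n p) = Int.fract ((i - minIdx α n p) * α) := by
  rw [orbit, orbit, ← fract_sub_of_fract_le (orbit_add_minIdx_le α p hi)]
  congr 1
  push_cast
  ring

theorem wordAt_v0_eq_of_minIdx_eq {α : ℝ} (hα : α ∈ Set.Icc 0 1) {p p' : ℤ} {n : ℕ}
    (h : minIdx α n p = minIdx α n p') : wordAt (v0 α) p n = wordAt (v0 α) p' n := by
  have hsub (i : ℕ) (hi : i ≤ n) : orbit α (p + i) - orbit α (p + minIdx α n p) =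
      orbit α (p' + i) - orbit α (p' + minIdx α n p') := by
    rw [orbit_sub_orbit_minIdx α p hi, orbit_sub_orbit_minIdx α p' hi, h]
  refine (wordAt_v0_eq_iff_orbit hα).2 fun i hi => ?_
  have hsub_zero := hsub 0 n.zero_le
  simp only [Nat.cast_zero, add_zero] at hsub_zero
  linarith [hsub i hi]

end Coding

section ThreeGap

/-- `x` and `y` witness that consecutive Farey fractions `a / q < α < b / q'` of order `n` enclose
`α`, with `x = q α - a` and `y = b - q' α`. The relation `q' x + q y = 1` is the unimodularity
`b q - a q' = 1` of the two fractions. -/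
structure IsFareyPair (α : ℝ) (n q q' : ℕ) (x y : ℝ) : Prop where
  exists_lower : ∃ a : ℤ, q * α - a = x
  exists_upper : ∃ b : ℤ, b - q' * α = y
  lower_pos : 0 < x
  upper_pos : 0 < y
  unimodular : q' * x + q * y = 1
  lower_le : q ≤ n
  upper_le : q' ≤ n
  lt_add : n < q + q'

/-- The length of the arc starting at `-i α` of the circle cut at the points `0, -α, …, -n α`. -/
def gapLen (n q q' : ℕ) (x y : ℝ) (i : ℕ) : ℝ :=
  if q ≤ i then x else if i + q' ≤ n then y else x + y

namespace IsFareyPair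

variable {α x y : ℝ} {n q q' : ℕ}

theorem gapLen_pos (h : IsFareyPair α n q q' x y) (i : ℕ) : 0 < gapLen n q q' x y i := by
  have hx := h.lower_pos
  have hy := h.upper_pos
  unfold gapLen
  split_ifs <;> linarith

theorem add_le_one (h : IsFareyPair α n q q' x y) : x + y ≤ 1 := by
  have hq : (1 : ℝ) ≤ q := by exact_mod_cast (by have := h.upper_le; have := h.lt_add; omega)
  have hq' : (1 : ℝ) ≤ q' := by exact_mod_cast (by have := h.lower_le; have := h.lt_add; omega)
  calc x + y
    _ ≤ q' * x + q * y := add_le_add (le_mul_of_one_le_left h.lower_pos.le hq')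
      (le_mul_of_one_le_left h.upper_pos.le hq)
    _ = 1 := h.unimodular

theorem gapLen_mem_Icc (h : IsFareyPair α n q q' x y) (i : ℕ) :
    gapLen n q q' x y i ∈ Set.Icc 0 1 := by
  refine ⟨(h.gapLen_pos i).le, ?_⟩
  have hx := h.lower_pos
  have hy := h.upper_pos
  have hxy := h.add_le_one
  unfold gapLen
  split_ifs <;> linarith

/-- By unimodularity the vectors `(q, -a)` and `(-q', b)` form a basis of `ℤ²`; the coordinates of
`(d, e)` in it cannot have opposite signs, as this would force `q + q' ≤ |d|`. -/
theorem exists_coords (h : IsFareyPair α n q q' x y) {d : ℤ} (hd : |d| ≤ n) (e : ℤ) :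
    ∃ r s : ℤ, d = r * q - s * q' ∧ d * α + e = r * x + s * y ∧
      (0 ≤ r ∧ 0 ≤ s ∨ r ≤ 0 ∧ s ≤ 0) := by
  obtain ⟨a, ha⟩ := h.exists_lower
  obtain ⟨b, hb⟩ := h.exists_upper
  have hdet : b * q - a * q' = 1 := by
    have : (b * q - a * q' : ℝ) = 1 := by
      linear_combination h.unimodular + q' * ha + q * hb
    exact_mod_cast this
  have hd_eq : d = (b * d + q' * e) * q - (a * d + q * e) * q' := by
    linear_combination -d * hdet
  refine ⟨b * d + q' * e, a * d + q * e, hd_eq, ?_, ?_⟩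
  · have hdet' : (b * q - a * q' : ℝ) = 1 := by exact_mod_cast hdet
    push_cast
    linear_combination (b * d + q' * e) * ha + (a * d + q * e) * hb - (d * α + e) * hdet'
  · generalize b * d + q' * e = r, a * d + q * e = s at hd_eq
    have hlt : |d| < q + q' := hd.trans_lt (by exact_mod_cast h.lt_add)
    rw [abs_lt, hd_eq] at hlt
    by_contra! hsign
    rcases lt_or_ge r 0 with hr | hr
    · have hs : 0 < s := hsign.2 hr.le
      nlinarith
    · have hs : s < 0 := hsign.1 hr
      have hr : 0 < r := by
        by_contra! hr
        exact absurd (hsign.2 hr) hs.not_gt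
      nlinarith

theorem eq_of_sub_mul_add_eq_zero (h : IsFareyPair α n q q' x y) {i i' : ℕ} (hi : i ≤ n)
    (hi' : i' ≤ n) {e : ℤ} (he : (i - i' : ℤ) * α + e = 0) : i = i' := by
  obtain ⟨r, s, hd, hrs, hsign⟩ := h.exists_coords (d := i - i') (by rw [abs_le]; omega) e
  have hx := h.lower_pos
  have hy := h.upper_pos
  have hzero : r * x + s * y = 0 := hrs ▸ mod_cast he
  have hr : (r : ℝ) = 0 := by
    rcases hsign with ⟨hr, hs⟩ | ⟨hr, hs⟩ <;> rify at hr hs <;> nlinarith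
  have hs : (s : ℝ) = 0 := by
    rcases hsign with ⟨hr, hs⟩ | ⟨hr, hs⟩ <;> rify at hr hs <;> nlinarith
  norm_cast at hr hs
  subst hr hs
  omega

theorem exists_gapLen_eq (h : IsFareyPair α n q q' x y) {i : ℕ} (hi : i ≤ n) :
    ∃ i' ≤ n, ∃ e : ℤ, gapLen n q q' x y i = (i - i' : ℤ) * α + e := by
  obtain ⟨a, ha⟩ := h.exists_lower
  obtain ⟨b, hb⟩ := h.exists_upper
  unfold gapLen
  split_ifs with hq hq'
  · refine ⟨i - q, by omega, -a, ?_⟩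
    push_cast [Nat.cast_sub hq]
    linarith
  · refine ⟨i + q', hq', b, ?_⟩
    push_cast
    linarith
  · have hle : q ≤ i + q' := by have := h.lower_le; omega
    refine ⟨i + q' - q, by have := h.upper_le; omega, b - a, ?_⟩
    push_cast [Nat.cast_sub hle]
    linarith

/-- With `exists_gapLen_eq` this is the three-gap theorem: the arc starting at `-i α` has length
`gapLen n q q' x y i`. -/
theorem gapLen_le (h : IsFareyPair α n q q' x y) {i i' : ℕ} (hi : i ≤ n) (hi' : i' ≤ n) {e : ℤ}
    (hpos : 0 < (i - i' : ℤ) * α + e) : gapLen n q q' x y i ≤ (i - i' : ℤ) * α + e := by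
  obtain ⟨r, s, hd, hrs, hsign⟩ := h.exists_coords (d := i - i') (by rw [abs_le]; omega) e
  have hx := h.lower_pos
  have hy := h.upper_pos
  have hlt := h.lt_add
  rw [hrs] at hpos ⊢
  obtain ⟨hr, hs⟩ : 0 ≤ r ∧ 0 ≤ s := hsign.resolve_right fun ⟨hr, hs⟩ => by
    rify at hr hs
    nlinarith
  have hrs_ne : r ≠ 0 ∨ s ≠ 0 := by
    by_contra! hzero
    simp [hzero] at hpos
  have hr_one (hi : n < i + q') : 1 ≤ r := by
    by_contra! hr
    obtain rfl : r = 0 := by omega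
    have : 1 ≤ s := by omega
    nlinarith
  have hs_one (hi : i < q) : 1 ≤ s := by
    by_contra! hs
    obtain rfl : s = 0 := by omega
    have : 1 ≤ r := by omega
    nlinarith
  rify at hr hs hr_one hs_one
  unfold gapLen
  split_ifs with hq hq'
  · nlinarith [hr_one (by norm_cast; omega)]
  · nlinarith [hs_one (by norm_cast; omega)]
  · nlinarith [hr_one (by norm_cast; omega), hs_one (by norm_cast; omega)]

end IsFareyPair

end ThreeGap

section Frequency

namespace IsFareyPair

variable {α x y : ℝ} {n q q' : ℕ}

theorem minIdx_eq_iff (h : IsFareyPair α n q q' x y) {p : ℤ} {i : ℕ} (hi : i ≤ n) :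
    minIdx α n p = i ↔ orbit α (p + i) < gapLen n q q' x y i := by
  constructor
  · rintro rfl
    by_contra! hle
    obtain ⟨i', hi', e, he⟩ := h.exists_gapLen_eq hi
    have hnext : orbit α (p + i') =
        orbit α (p + minIdx α n p) - gapLen n q q' x y (minIdx α n p) := by
      refine Int.fract_eq_iff.2 ⟨sub_nonneg.2 hle, ?_,
        ⌊((p + minIdx α n p : ℤ) : ℝ) * α⌋ + e, ?_⟩
      · linarith [orbit_lt_one α (p + minIdx α n p), h.gapLen_pos (minIdx α n p)]
      · have hfloor := Int.self_sub_floor (((p + minIdx α n p : ℤ) : ℝ) * α)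
        rw [he, orbit, ← hfloor]
        push_cast
        ring
    linarith [orbit_add_minIdx_le α p hi', h.gapLen_pos (minIdx α n p)]
  · intro hlt
    have hsub : orbit α (p + i) - orbit α (p + minIdx α n p) = (i - minIdx α n p : ℤ) * α +
        (-⌊((i - minIdx α n p : ℤ) : ℝ) * α⌋ : ℤ) := by
      rw [orbit_sub_orbit_minIdx α p hi, Int.fract]
      push_cast
      ring
    rcases (orbit_add_minIdx_le α p hi).eq_or_lt with heq | hmin
    · exact (h.eq_of_sub_mul_add_eq_zero hi (minIdx_le α n p)
        (hsub.symm.trans (sub_eq_zero.2 heq.symm))).symm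
    · have hgap := h.gapLen_le hi (minIdx_le α n p) (hsub ▸ sub_pos.2 hmin)
      linarith [orbit_nonneg α (p + minIdx α n p)]

theorem minIdx_neg (h : IsFareyPair α n q q' x y) {i : ℕ} (hi : i ≤ n) :
    minIdx α n (-i) = i := by
  rw [h.minIdx_eq_iff hi, neg_add_cancel, orbit_zero]
  exact h.gapLen_pos i

theorem minIdx_eq_lower_sub (h : IsFareyPair α n q q' x y) {p : ℕ} (hp : 0 < p)
    (hpn : p + n < q + q') : minIdx α n p = q - p := by
  have hpq : p ≤ q := by have := h.upper_le; omega
  have hqn := h.lower_le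
  have horbit : orbit α q = x := by
    obtain ⟨a, ha⟩ := h.exists_lower
    exact Int.fract_eq_iff.2 ⟨h.lower_pos.le, by linarith [h.add_le_one, h.upper_pos], a,
      by push_cast; linarith⟩
  rw [h.minIdx_eq_iff (by omega), Nat.cast_sub hpq, add_sub_cancel, horbit, gapLen,
    if_neg (by omega), if_neg (by omega)]
  exact lt_add_of_pos_right x h.upper_pos

theorem wordAt_v0_eq_iff (h : IsFareyPair α n q q' x y) (hα : α ∈ Set.Icc 0 1) {p p' : ℤ} :
    wordAt (v0 α) p n = wordAt (v0 α) p' n ↔ minIdx α n p = minIdx α n p' := by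
  refine ⟨fun hw => ?_, wordAt_v0_eq_of_minIdx_eq hα⟩
  rw [wordAt_v0_eq_iff_orbit hα] at hw
  have hi := minIdx_le α n p
  have hi' := minIdx_le α n p'
  have hle := orbit_add_minIdx_le α p hi'
  have hle' := orbit_add_minIdx_le α p' hi
  have heq : orbit α (p + minIdx α n p') - orbit α (p + minIdx α n p) = 0 := by
    linarith [hw _ hi, hw _ hi']
  rw [orbit_sub_orbit_minIdx α p hi', Int.fract_eq_iff] at heq
  obtain ⟨-, -, e, he⟩ := heq
  exact (h.eq_of_sub_mul_add_eq_zero hi' hi (e := -e) (by push_cast; linarith)).symm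

theorem hasFreq (h : IsFareyPair α n q q' x y) (hα : α ∈ Set.Icc 0 1) {v : ℤ → Bool}
    (hv : v ∈ hull α) (p : ℤ) :
    HasFreq v (wordAt (v0 α) p n) (gapLen n q q' x y (minIdx α n p)) := by
  have hi := minIdx_le α n p
  obtain ⟨i', -, e, he⟩ := h.exists_gapLen_eq hi
  rw [HasFreq, length_wordAt]
  refine tendsto_div_of_abs_sub_le (K := |((minIdx α n p - i' : ℤ) : ℝ)|) fun N => ?_
  obtain ⟨M, hM⟩ := exists_eq_translate_of_mem_hull hv (Finset.Icc 1 (N + n))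
  have hvisit : ∀ m ∈ Finset.Icc 1 N, (wordAt v (m : ℤ) n = wordAt (v0 α) p n ↔
      Int.fract (m * α + (minIdx α n p - M) * α) < gapLen n q q' x y (minIdx α n p)) := by
    intro m hm
    rw [Finset.mem_Icc] at hm
    have hwindow : wordAt v (m : ℤ) n = wordAt (v0 α) (m - M) n :=
      wordAt_eq_wordAt_iff.2 fun l hl => by
        rw [hM _ (Finset.mem_Icc.2 (by omega)), add_sub_right_comm]
    rw [hwindow, h.wordAt_v0_eq_iff hα, h.minIdx_eq_iff hi, orbit]
    push_cast
    ring_nf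
  rw [Finset.filter_congr hvisit]
  exact abs_card_fract_lt_sub_le (h.gapLen_mem_Icc _) he _ N

theorem hasFreq_iff (h : IsFareyPair α n q q' x y) (hα : α ∈ Set.Icc 0 1) {v : ℤ → Bool}
    (hv : v ∈ hull α) {p : ℤ} {L : ℝ} :
    HasFreq v (wordAt (v0 α) p n) L ↔ gapLen n q q' x y (minIdx α n p) = L :=
  ⟨tendsto_nhds_unique (h.hasFreq hα hv p), fun hL => hL ▸ h.hasFreq hα hv p⟩

theorem isFactor_wordAt_v0 (h : IsFareyPair α n q q' x y) (hα : α ∈ Set.Icc 0 1) (p : ℤ) :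
    IsFactor α (wordAt (v0 α) p n) := by
  obtain ⟨m, hm⟩ := (h.hasFreq hα (v0_mem_hull α) p).exists_wordAt_eq (h.gapLen_pos _).ne'
  exact ⟨m, hm.symm⟩

theorem ncard_factors (h : IsFareyPair α n q q' x y) (hα : α ∈ Set.Icc 0 1)
    {P : List Bool → Prop} {I : Finset ℕ} (hI : ∀ i ∈ I, i ≤ n)
    (hP : ∀ p, P (wordAt (v0 α) p n) ↔ minIdx α n p ∈ I) :
    {w : List Bool | w.length = n ∧ IsFactor α w ∧ P w}.ncard = I.card := by
  have himage : {w : List Bool | w.length = n ∧ IsFactor α w ∧ P w} =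
      (fun i : ℕ => wordAt (v0 α) (-i) n) '' I := by
    ext w
    constructor
    · rintro ⟨hlen, ⟨m, hm⟩, hw⟩
      rw [hlen, word_eq_wordAt] at hm
      rw [hm, hP] at hw
      exact ⟨_, hw, hm ▸ (h.wordAt_v0_eq_iff hα).2 (h.minIdx_neg (hI _ hw))⟩
    · rintro ⟨i, hi, rfl⟩
      exact ⟨length_wordAt _ _ _, h.isFactor_wordAt_v0 hα _,
        (hP _).2 ((h.minIdx_neg (hI i hi)).symm ▸ hi)⟩
  rw [himage, Set.InjOn.ncard_image, Set.ncard_coe_finset]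
  intro i hi i' hi' heq
  rwa [h.wordAt_v0_eq_iff hα, h.minIdx_neg (hI i hi), h.minIdx_neg (hI i' hi')] at heq

theorem occursIn_iff (h : IsFareyPair α n q q' x y) (hα : α ∈ Set.Icc 0 1) {p : ℤ} :
    OccursIn α (wordAt (v0 α) p n) (q + q' - 2) ↔
      minIdx α n p < q ∧ n < minIdx α n p + q' := by
  have hq := h.lower_le
  have hq' := h.upper_le
  have hlt := h.lt_add
  have hocc : OccursIn α (wordAt (v0 α) p n) (q + q' - 2) ↔
      ∃ m : ℕ, m + n ≤ q + q' - 2 ∧ minIdx α n p = minIdx α n ((m + 1 : ℕ) : ℤ) := by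
    simp only [OccursIn, length_wordAt, word_eq_wordAt, h.wordAt_v0_eq_iff hα, Nat.cast_add,
      Nat.cast_one]
  rw [hocc]
  constructor
  · rintro ⟨m, hm, heq⟩
    rw [h.minIdx_eq_lower_sub m.succ_pos (by omega)] at heq
    omega
  · rintro ⟨hi, hi'⟩
    refine ⟨q - minIdx α n p - 1, by omega, ?_⟩
    rw [h.minIdx_eq_lower_sub (Nat.succ_pos _) (by omega)]
    omega

theorem gapLen_eq_lower_iff (h : IsFareyPair α n q q' x y) (hxy : x ≠ y) {i : ℕ} :
    gapLen n q q' x y i = x ↔ q ≤ i := by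
  have hy := h.upper_pos
  unfold gapLen
  split_ifs with hq hq' <;> simp [hq, hxy.symm, hy.ne']

theorem gapLen_eq_upper_iff (h : IsFareyPair α n q q' x y) (hxy : x ≠ y) {i : ℕ} :
    gapLen n q q' x y i = y ↔ i + q' ≤ n := by
  have hx := h.lower_pos
  have hlt := h.lt_add
  unfold gapLen
  split_ifs with hq hq'
  · exact iff_of_false hxy (by omega)
  · exact iff_of_true rfl hq'
  · exact iff_of_false (by linarith) hq'

theorem gapLen_eq_add_iff (h : IsFareyPair α n q q' x y) {i : ℕ} :
    gapLen n q q' x y i = x + y ↔ i < q ∧ n < i + q' := by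
  have hx := h.lower_pos
  have hy := h.upper_pos
  unfold gapLen
  split_ifs with hq hq' <;> simp [hx.ne', hy.ne'] <;> omega

theorem exists_hasFreq (h : IsFareyPair α n q q' x y) (hα : α ∈ Set.Icc 0 1) {v : ℤ → Bool}
    (hv : v ∈ hull α) {w : List Bool} (hlen : w.length = n) (hw : IsFactor α w) :
    ∃ L : ℝ, HasFreq v w L ∧ (L = x + y ∨ L = x ∨ L = y) := by
  obtain ⟨m, hm⟩ := hw
  rw [hm, hlen, word_eq_wordAt]
  refine ⟨_, h.hasFreq hα hv _, ?_⟩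
  unfold gapLen
  split_ifs <;> simp

theorem hasFreq_add_iff_occursIn (h : IsFareyPair α n q q' x y) (hα : α ∈ Set.Icc 0 1)
    {v : ℤ → Bool} (hv : v ∈ hull α) {w : List Bool} (hlen : w.length = n) (hw : IsFactor α w) :
    HasFreq v w (x + y) ↔ OccursIn α w (q + q' - 2) := by
  obtain ⟨m, hm⟩ := hw
  rw [hm, hlen, word_eq_wordAt, h.hasFreq_iff hα hv, h.gapLen_eq_add_iff, h.occursIn_iff hα]

theorem ncard_occursIn (h : IsFareyPair α n q q' x y) (hα : α ∈ Set.Icc 0 1) :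
    {w : List Bool | w.length = n ∧ IsFactor α w ∧ OccursIn α w (q + q' - 2)}.ncard =
      q + q' - (n + 1) := by
  have := h.lower_le
  have := h.upper_le
  rw [h.ncard_factors hα (I := Finset.Ico (n + 1 - q') q)]
  · rw [Nat.card_Ico]
    omega
  · simp only [Finset.mem_Ico]
    omega
  · intro p
    rw [h.occursIn_iff hα, Finset.mem_Ico]
    omega

theorem ncard_hasFreq_lower (h : IsFareyPair α n q q' x y) (hα : α ∈ Set.Icc 0 1) (hxy : x ≠ y)
    {v : ℤ → Bool} (hv : v ∈ hull α) :
    {w : List Bool | w.length = n ∧ IsFactor α w ∧ HasFreq v w x}.ncard = n + 1 - q := by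
  rw [h.ncard_factors hα (I := Finset.Ico q (n + 1)), Nat.card_Ico]
  · simp only [Finset.mem_Ico]
    omega
  · intro p
    have := minIdx_le α n p
    rw [h.hasFreq_iff hα hv, h.gapLen_eq_lower_iff hxy, Finset.mem_Ico]
    omega

theorem ncard_hasFreq_upper (h : IsFareyPair α n q q' x y) (hα : α ∈ Set.Icc 0 1) (hxy : x ≠ y)
    {v : ℤ → Bool} (hv : v ∈ hull α) :
    {w : List Bool | w.length = n ∧ IsFactor α w ∧ HasFreq v w y}.ncard = n + 1 - q' := by
  have := h.upper_le
  rw [h.ncard_factors hα (I := Finset.range (n + 1 - q')), Finset.card_range]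
  · simp only [Finset.mem_range]
    omega
  · intro p
    rw [h.hasFreq_iff hα hv, h.gapLen_eq_upper_iff hxy, Finset.mem_range]
    omega

end IsFareyPair

end Frequency

/-- The case in which `q` and `q'` are swapped is allowed because for convergents the parity of the
index decides which of the two fractions lies below `α`. -/
theorem factor_frequency_fib_general {α x y : ℝ} {n q q' : ℕ} (hα : α ∈ Set.Icc 0 1)
    (h : IsFareyPair α n q q' x y ∨ IsFareyPair α n q' q y x) (hxy : x ≠ y)
    {v : ℤ → Bool} (hv : v ∈ hull α) :
    (∀ w : List Bool, w.length = n → IsFactor α w →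
        ∃ L : ℝ, HasFreq v w L ∧ (L = x + y ∨ L = y ∨ L = x)) ∧
      (∀ w : List Bool, w.length = n → IsFactor α w →
        (HasFreq v w (x + y) ↔ OccursIn α w (q + q' - 2))) ∧
      {w : List Bool | w.length = n ∧ IsFactor α w ∧ OccursIn α w (q + q' - 2)}.ncard =
        q + q' - (n + 1) ∧
      {w : List Bool | w.length = n ∧ IsFactor α w ∧ HasFreq v w y}.ncard = n + 1 - q' ∧
      {w : List Bool | w.length = n ∧ IsFactor α w ∧ HasFreq v w x}.ncard = n + 1 - q := by
  rcases h with h | h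
  · simp only [or_comm (b := _ = x)]
    exact ⟨fun _ => h.exists_hasFreq hα hv, fun _ => h.hasFreq_add_iff_occursIn hα hv,
      h.ncard_occursIn hα, h.ncard_hasFreq_upper hα hxy hv, h.ncard_hasFreq_lower hα hxy hv⟩
  · rw [add_comm q, add_comm x]
    exact ⟨fun _ => h.exists_hasFreq hα hv, fun _ => h.hasFreq_add_iff_occursIn hα hv,
      h.ncard_occursIn hα, h.ncard_hasFreq_lower hα hxy.symm hv,
      h.ncard_hasFreq_upper hα hxy.symm hv⟩

section GoldenRatio

theorem fib_succ_mul_inv_goldenRatio_sub_fib (m : ℕ) :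
    Nat.fib (m + 1) * φ⁻¹ - Nat.fib m = (-1) ^ m * φ⁻¹ ^ (m + 1) := by
  have h := Real.goldenConj_mul_fib_succ_add_fib m
  rw [← neg_neg Real.goldenConj, ← Real.inv_goldenRatio, neg_pow] at h
  linear_combination -h

theorem fib_mul_inv_goldenRatio_pow_add (m : ℕ) :
    Nat.fib m * φ⁻¹ ^ (m + 1) + Nat.fib (m + 1) * φ⁻¹ ^ m = 1 := by
  have hφ := Real.goldenRatio_ne_zero
  calc Nat.fib m * φ⁻¹ ^ (m + 1) + Nat.fib (m + 1) * φ⁻¹ ^ m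
    _ = (φ * Nat.fib (m + 1) + Nat.fib m) * φ⁻¹ ^ (m + 1) := by
      linear_combination -(Nat.fib (m + 1) * φ⁻¹ ^ m) * mul_inv_cancel₀ hφ
    _ = 1 := by
      rw [Real.goldenRatio_mul_fib_succ_add_fib, ← mul_pow, mul_inv_cancel₀ hφ, one_pow]

theorem inv_goldenRatio_pow_add (m : ℕ) : φ⁻¹ ^ (m + 2) + φ⁻¹ ^ (m + 1) = φ⁻¹ ^ m := by
  have hsq : φ⁻¹ ^ 2 = 1 - φ⁻¹ := by
    rw [Real.inv_goldenRatio]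
    linear_combination Real.goldenConj_sq
  linear_combination φ⁻¹ ^ m * hsq

theorem inv_goldenRatio_mem_Ioo : φ⁻¹ ∈ Set.Ioo 0 1 :=
  ⟨inv_pos.2 Real.goldenRatio_pos, inv_lt_one_of_one_lt₀ Real.one_lt_goldenRatio⟩

theorem isFareyPair_inv_goldenRatio {m n : ℕ} (hlo : Nat.fib (m + 2) ≤ n)
    (hhi : n < Nat.fib (m + 2) + Nat.fib (m + 1)) :
    IsFareyPair φ⁻¹ n (Nat.fib (m + 2)) (Nat.fib (m + 1)) (φ⁻¹ ^ (m + 2)) (φ⁻¹ ^ (m + 1)) ∨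
      IsFareyPair φ⁻¹ n (Nat.fib (m + 1)) (Nat.fib (m + 2)) (φ⁻¹ ^ (m + 1)) (φ⁻¹ ^ (m + 2)) := by
  have hpos (i : ℕ) : 0 < φ⁻¹ ^ i := pow_pos inv_goldenRatio_mem_Ioo.1 i
  have hmono : Nat.fib (m + 1) ≤ n := Nat.fib_le_fib_succ.trans hlo
  have hdist := fib_succ_mul_inv_goldenRatio_sub_fib m
  have hdist_succ := fib_succ_mul_inv_goldenRatio_sub_fib (m + 1)
  have hunimod := fib_mul_inv_goldenRatio_pow_add (m + 1)
  rcases m.even_or_odd with hm | hm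
  · rw [hm.neg_one_pow] at hdist
    rw [hm.add_one.neg_one_pow] at hdist_succ
    exact .inr ⟨⟨Nat.fib m, by push_cast; linarith⟩, ⟨Nat.fib (m + 1), by push_cast; linarith⟩,
      hpos _, hpos _, by linarith, hmono, hlo, by omega⟩
  · rw [hm.neg_one_pow] at hdist
    rw [hm.add_one.neg_one_pow] at hdist_succ
    exact .inl ⟨⟨Nat.fib (m + 1), by push_cast; linarith⟩, ⟨Nat.fib m, by push_cast; linarith⟩,
      hpos _, hpos _, hunimod, hlo, hmono, hhi⟩

end GoldenRatio

/-- For `n = F_k + j` (`k ≥ 2`, `0 ≤ j ≤ F_{k-1} - 1`) and every `v ∈ Ω`,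
every factor of `v₀` of length `n` has a frequency in `v`, belonging to
`{τ^{-(k-1)}, τ^{-k}, τ^{-(k+1)}}`; the frequency is `τ^{-(k-1)}` exactly for the
`F_{k-1} - j - 1` factors occurring in `(v₀(1), …, v₀(F_{k+1} - 2))`, and exactly
`F_{k-2} + j + 1` (resp. `j + 1`) factors have frequency `τ^{-k}` (resp. `τ^{-(k+1)}`). -/
theorem factor_frequency_fib (α τ : ℝ) (hα : α = (Real.sqrt 5 - 1) / 2)
    (hτ : τ = (1 + Real.sqrt 5) / 2)
    (k j n : ℕ) (hk : 2 ≤ k) (hj : j ≤ F (k - 1) - 1) (hn : n = F k + j) :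
    ∀ v ∈ hull α,
      (∀ w : List Bool, w.length = n → IsFactor α w →
          ∃ L : ℝ, HasFreq v w L ∧
            (L = (1 / τ) ^ (k - 1) ∨ L = (1 / τ) ^ k ∨ L = (1 / τ) ^ (k + 1))) ∧
      (∀ w : List Bool, w.length = n → IsFactor α w →
          (HasFreq v w ((1 / τ) ^ (k - 1)) ↔ OccursIn α w (F (k + 1) - 2))) ∧
      {w : List Bool | w.length = n ∧ IsFactor α w ∧ OccursIn α w (F (k + 1) - 2)}.ncard
          = F (k - 1) - j - 1 ∧
      {w : List Bool | w.length = n ∧ IsFactor α w ∧ HasFreq v w ((1 / τ) ^ k)}.ncard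
          = F (k - 2) + j + 1 ∧
      {w : List Bool | w.length = n ∧ IsFactor α w ∧ HasFreq v w ((1 / τ) ^ (k + 1))}.ncard
          = j + 1 := by
  intro v hv
  obtain rfl : τ = φ := hτ
  obtain rfl : α = φ⁻¹ := by rw [hα, Real.inv_goldenRatio, Real.goldenConj]; ring
  obtain ⟨m, rfl⟩ := Nat.exists_eq_add_of_le' hk
  obtain ⟨hφ_pos, hφ_lt⟩ := inv_goldenRatio_mem_Ioo
  have hF : F (m + 2 + 1) = F (m + 2) + F (m + 1) := Nat.fib_add_two.trans (add_comm _ _)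
  have hF' : F (m + 2) = F m + F (m + 1) := Nat.fib_add_two
  have hF_pos : 0 < F (m + 1) := Nat.fib_pos.2 (by omega)
  simp only [one_div, hF, Nat.add_sub_cancel, show m + 2 - 1 = m + 1 from rfl] at hj ⊢
  have hfarey := isFareyPair_inv_goldenRatio (m := m + 1) (n := n)
    (hn ▸ Nat.le_add_right _ _) (show n < F (m + 2) + F (m + 1) by omega)
  have hne : φ⁻¹ ^ (m + 3) ≠ φ⁻¹ ^ (m + 2) :=
    (pow_lt_pow_right_of_lt_one₀ hφ_pos hφ_lt (by omega)).ne
  have hfreq := factor_frequency_fib_general ⟨hφ_pos.le, hφ_lt.le⟩ hfarey hne hv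
  rw [inv_goldenRatio_pow_add] at hfreq
  rw [show F (m + 1) - j - 1 = F (m + 2) + F (m + 1) - (n + 1) by omega,
    show F m + j + 1 = n + 1 - F (m + 1) by omega, show j + 1 = n + 1 - F (m + 2) by omega]
  exact hfreq

end
end
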